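/- Let k, ℓ, n be integers with k ≥ 1 satisfying one of: (1) 0 ≤ ℓ ≤ k and n ≥ 1; (2) k < ℓ and 2ℓ < 3k and n ≥ 2; (3) 3k ≤ 2ℓ and ℓ < 2k and either n = 2 or n·(2k − ℓ) ≥ ℓ. Then there exists a (k,ℓ)-tight multigraph on a vertex set of cardinality n in which every vertex carries at most k − ℓ loops (no loops when ℓ ≥ k) and every pair of distinct vertices is joined by at most 2k − ℓ parallel edges. -/

import Mathlib

/-!
Sparsity of `{v}` and `{u, v}` already bounds the number of loops and of parallel edges, so only
a tight multigraph has to be found.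

For `0 ≤ l ≤ k`, put `k - l` loops on each vertex and add `l` copies of a spanning star: a nonempty
`S` spans at most `(k - l)|S| + l(|S| - 1) = k|S| - l` edges.

For `k < l < 2k`, let `m = 2k - l`, so `0 < m < k`. In the complete graph with all multiplicities
`m`, a set of `s ≥ 2` vertices spans `m s(s-1)/2` edges, which is at most
`ks - l = k(s - 2) + m` if `(s + 1)m ≤ 2k`, and at least that if `(s + 1)m ≥ 2k`; for `s = 2` the
two numbers are equal. So if `n = 2`, or if `nm < 2k ≤ (n + 1)m`, *any* submultigraph with `kn - l` edges
is tight (`exists_tight_direct`): the proper vertex subsets impose no condition.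
If `2k ≤ nm` and `n ≥ 3`, take a tight graph on `n - 1` vertices and join a new vertex to the old
ones by `k` edges, at most `m` to each (`exists_tight_extend`); there is room because
`(n - 1)m ≥ 2k - m ≥ k`.
-/

/-- The number of edges of the multiset `E` (counted with multiplicity)
whose endpoints both lie in the vertex subset `S`. -/
def spanCount {V : Type*} [DecidableEq V] (E : Multiset (Sym2 V)) (S : Finset V) : ℕ :=
  (E.filter (fun e => e ∈ S.sym2)).card

/-- A multigraph on the finite vertex type `V` with edge multiset `E` is
`(k,ℓ)`-sparse if every subset `S` of vertices spans at most `max 0 (k|S| - ℓ)` edges. -/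
def Sparse {V : Type*} [Fintype V] [DecidableEq V] (k l : ℤ) (E : Multiset (Sym2 V)) : Prop :=
  ∀ S : Finset V, (spanCount E S : ℤ) ≤ max 0 (k * S.card - l)

/-- A multigraph is `(k,ℓ)`-tight if it is `(k,ℓ)`-sparse and has exactly `k|V| - ℓ` edges. -/
def Tight {V : Type*} [Fintype V] [DecidableEq V] (k l : ℤ) (E : Multiset (Sym2 V)) : Prop :=
  Sparse k l E ∧ (Multiset.card E : ℤ) = k * (Fintype.card V) - l

section Helpers

/-! ### Counting spanned edges -/

variable {V : Type*} [DecidableEq V]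

lemma spanCount_add (E F : Multiset (Sym2 V)) (S : Finset V) :
    spanCount (E + F) S = spanCount E S + spanCount F S := by
  simp [spanCount]

lemma spanCount_le_of_le {E F : Multiset (Sym2 V)} (h : E ≤ F) (S : Finset V) :
    spanCount E S ≤ spanCount F S :=
  Multiset.card_le_card (Multiset.filter_le_filter _ h)

lemma spanCount_le_card (E : Multiset (Sym2 V)) (S : Finset V) :
    spanCount E S ≤ Multiset.card E :=
  Multiset.card_le_card (Multiset.filter_le _ _)

lemma spanCount_nsmul (m : ℕ) (P : Finset (Sym2 V)) (S : Finset V) :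
    spanCount (m • P.val) S = m * (P.filter (fun e => e ∈ S.sym2)).card := by
  simp [spanCount, Multiset.filter_nsmul, Finset.card_def]

lemma exists_le_nsmul_card {α : Type*} (m c : ℕ) (P : Finset α) (h : c ≤ m * P.card) :
    ∃ E : Multiset α, E ≤ m • P.val ∧ Multiset.card E = c := by
  have hpos : 0 < Multiset.card (Multiset.powersetCard c (m • P.val)) := by
    rw [Multiset.card_powersetCard]
    exact Nat.choose_pos (by simpa using h)
  obtain ⟨E, hE⟩ := Multiset.card_pos_iff_exists_mem.1 hpos
  exact ⟨E, Multiset.mem_powersetCard.1 hE⟩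

/-! ### Stars and complete graphs -/

/-- The edges of the star with centre `v` and leaves `T`. -/
def starEdges (v : V) (T : Finset V) : Finset (Sym2 V) := T.image (fun w => s(v, w))

lemma card_starEdges (v : V) (T : Finset V) : (starEdges v T).card = T.card := by
  apply Finset.card_image_of_injective
  intro a b h
  exact Sym2.congr_right.1 h

lemma starEdges_filter_card_le (v : V) (T S : Finset V) (hv : v ∉ T) :
    ((starEdges v T).filter (fun e => e ∈ S.sym2)).card ≤ S.card - 1 := by
  by_cases hS : v ∈ S
  · rw [← Finset.card_erase_of_mem hS, ← card_starEdges v]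
    apply Finset.card_le_card
    intro e he
    simp only [starEdges, Finset.mem_filter, Finset.mem_image] at he ⊢
    obtain ⟨⟨w, hw, rfl⟩, h2⟩ := he
    rw [Finset.mk_mem_sym2_iff] at h2
    exact ⟨w, Finset.mem_erase.2 ⟨fun h => hv (h ▸ hw), h2.2⟩, rfl⟩
  · rw [Finset.filter_eq_empty_iff.2]
    · simp
    · intro e he h
      simp only [starEdges, Finset.mem_image] at he
      obtain ⟨w, hw, rfl⟩ := he
      exact hS (Finset.mk_mem_sym2_iff.1 h).1

/-- The edges of the complete simple graph on `T`. -/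
def completeEdges (T : Finset V) : Finset (Sym2 V) := T.offDiag.image Sym2.mk.uncurry

lemma completeEdges_filter_card_le (T S : Finset V) :
    ((completeEdges T).filter (fun e => e ∈ S.sym2)).card ≤ S.card.choose 2 := by
  rw [← Sym2.card_image_offDiag]
  apply Finset.card_le_card
  intro e he
  simp only [completeEdges, Finset.mem_filter, Finset.mem_image, Finset.mem_offDiag] at he ⊢
  obtain ⟨⟨⟨a, b⟩, ⟨ha, hb, hab⟩, rfl⟩, h2⟩ := he
  have h3 := Finset.mk_mem_sym2_iff.1 h2
  exact ⟨(a, b), ⟨h3.1, h3.2, hab⟩, rfl⟩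

/-! ### Tight multigraphs for `k < l < 2k` -/

/-- `E` is a `(k, l)`-tight multigraph on the vertex set `T`. Varying `T` inside a fixed ambient
type allows induction on the number of vertices. -/
def TightOn (k l : ℤ) (T : Finset V) (E : Multiset (Sym2 V)) : Prop :=
  (∀ e ∈ E, e ∈ T.sym2) ∧ (Multiset.card E : ℤ) = k * T.card - l ∧
    ∀ S ⊆ T, (spanCount E S : ℤ) ≤ max 0 (k * S.card - l)

/-- When every proper subset of `T` is too small for the multiplicity bound `m` to violate sparsity,
any choice of the right number of edges is tight. -/
lemma exists_tight_direct (k m : ℕ) (T : Finset V)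
    (hT : T.card = 2 ∨ (2 < T.card ∧ T.card * m < 2 * k ∧ 2 * k ≤ (T.card + 1) * m)) :
    ∃ E, TightOn (k : ℤ) (2 * k - m) T E := by
  have hT2 : 2 ≤ T.card := by omega
  have hc : (completeEdges T).card = T.card.choose 2 := Sym2.card_image_offDiag T
  obtain ⟨t, ht⟩ : ∃ t, T.card = t + 2 := ⟨T.card - 2, by omega⟩
  have hchoose (a : ℕ) : ((a + 2).choose 2) * 2 = (a + 2) * (a + 1) := by
    rw [Nat.choose_two_right, Nat.div_mul_cancel]
    · simp
    · exact (Nat.even_mul_pred_self (a + 2)).two_dvd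
  obtain ⟨E, hE, hEc⟩ := exists_le_nsmul_card m (k * t + m) (completeEdges T) (by
    rw [hc, ht]
    have h1 := hchoose t
    rcases hT with h | h
    · obtain rfl : t = 0 := by omega
      simp
    · rw [ht] at h
      obtain ⟨-, -, h3⟩ := h
      have h4 := Nat.mul_le_mul_left t h3
      nlinarith)
  refine ⟨E, ?_, ?_, ?_⟩
  · intro e he
    have := Multiset.mem_of_mem_nsmul (Multiset.mem_of_le hE he)
    simp only [completeEdges, Finset.mem_val, Finset.mem_image, Finset.mem_offDiag] at this
    obtain ⟨⟨a, b⟩, ⟨ha, hb, -⟩, rfl⟩ := this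
    exact Finset.mk_mem_sym2_iff.2 ⟨ha, hb⟩
  · rw [hEc, ht]; push_cast; ring
  · intro S hS
    by_cases hST : S = T
    · subst hST
      refine le_max_of_le_right ?_
      have h1 := spanCount_le_card E S
      rw [hEc] at h1
      rw [ht]
      zify at h1
      push_cast
      linarith
    · have hlt : S.card < T.card := Finset.card_lt_card (hS.ssubset_of_ne hST)
      have h1 : spanCount E S ≤ m * S.card.choose 2 :=
        (spanCount_le_of_le hE S).trans (by
          rw [spanCount_nsmul]
          exact Nat.mul_le_mul_left _ (completeEdges_filter_card_le T S))
      rcases Nat.lt_or_ge S.card 2 with h2 | h2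
      · rw [Nat.choose_eq_zero_of_lt h2] at h1
        apply le_max_of_le_left
        omega
      · obtain ⟨s, hs⟩ : ∃ s, S.card = s + 2 := ⟨S.card - 2, by omega⟩
        refine le_max_of_le_right ?_
        rw [hs] at h1 ⊢
        have h3 := hchoose s
        have h4 : (s + 3) * m ≤ 2 * k := by
          have : (s + 3) * m ≤ T.card * m := Nat.mul_le_mul_right _ (by omega)
          omega
        have h5 := Nat.mul_le_mul_left s h4
        have h6 : spanCount E S ≤ k * s + m := by nlinarith
        zify at h6
        push_cast
        linarith

/-- Joining a new vertex `v` to the old vertices by `k` edges, at most `m` of them parallel,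
preserves tightness. -/
lemma exists_tight_extend (k m : ℕ) (hmk : m < k) (T : Finset V) (v : V) (hv : v ∉ T)
    (hk : k ≤ m * T.card) (h : ∃ E, TightOn (k : ℤ) (2 * k - m) T E) :
    ∃ E, TightOn (k : ℤ) (2 * k - m) (insert v T) E := by
  obtain ⟨E, hET, hEc, hEs⟩ := h
  obtain ⟨F, hF, hFc⟩ := exists_le_nsmul_card m k (starEdges v T) (by rwa [card_starEdges])
  have hFS (S : Finset V) : spanCount F S ≤ m * (S.card - 1) :=
    (spanCount_le_of_le hF S).trans (by
      rw [spanCount_nsmul]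
      exact Nat.mul_le_mul_left _ (starEdges_filter_card_le v T S hv))
  have hFm : ∀ e ∈ F, ∃ w ∈ T, e = s(v, w) := by
    intro e he
    have := Multiset.mem_of_mem_nsmul (Multiset.mem_of_le hF he)
    simp only [starEdges, Finset.mem_val, Finset.mem_image] at this
    obtain ⟨w, hw, rfl⟩ := this
    exact ⟨w, hw, rfl⟩
  refine ⟨E + F, ?_, ?_, ?_⟩
  · intro e he
    rcases Multiset.mem_add.1 he with he | he
    · exact Finset.sym2_mono (Finset.subset_insert v T) (hET e he)
    · obtain ⟨w, hw, rfl⟩ := hFm e he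
      exact Finset.mk_mem_sym2_iff.2
        ⟨Finset.mem_insert_self _ _, Finset.mem_insert_of_mem hw⟩
  · rw [Multiset.card_add, Finset.card_insert_of_notMem hv]
    push_cast
    rw [hEc, hFc]
    ring
  · intro S hS
    rw [spanCount_add]
    by_cases hvS : v ∈ S
    · have hE1 : spanCount E S = spanCount E (S.erase v) := by
        unfold spanCount
        congr 1
        apply Multiset.filter_congr
        intro e he
        have := hET e he
        induction e with
        | _ a b =>
          rw [Finset.mk_mem_sym2_iff] at this
          rw [Finset.mk_mem_sym2_iff, Finset.mk_mem_sym2_iff, Finset.mem_erase, Finset.mem_erase]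
          have ha : a ≠ v := fun h => hv (h ▸ this.1)
          have hb : b ≠ v := fun h => hv (h ▸ this.2)
          tauto
      have h1 := hEs (S.erase v) (Finset.subset_insert_iff.1 hS)
      have hcard := Finset.card_erase_add_one hvS
      rw [← hE1] at h1
      have h2 := hFS S
      have h3 := (spanCount_le_card F S).trans_eq hFc
      generalize (S.erase v).card = s at *
      rw [← hcard] at h2 ⊢
      -- An empty or one-element `S.erase v` is limited by the multiplicity bound; a larger one
      -- leaves room for all `k` new edges.
      match s with
      | 0 => simp at h1 h2; omega
      | 1 => simp at h1 h2; omega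
      | s + 2 =>
        have h4 : (0 : ℤ) ≤ k * s := by positivity
        push_cast at h1 ⊢
        rw [max_eq_right (by linarith)] at h1
        apply le_max_of_le_right
        zify at h3
        linarith
    · have hF0 : spanCount F S = 0 := by
        unfold spanCount
        rw [Multiset.card_eq_zero, Multiset.filter_eq_nil]
        intro e he h
        obtain ⟨w, -, rfl⟩ := hFm e he
        exact hvS (Finset.mk_mem_sym2_iff.1 h).1
      rw [hF0, add_zero]
      exact hEs S ((Finset.subset_insert_iff_of_notMem hvS).1 hS)

/-- Tight multigraphs without loops, for `l = 2k - m`: induction on `T` by `exists_tight_extend`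
until `exists_tight_direct` applies. -/
lemma exists_tightOn (k m : ℕ) (hmk : m < k) (T : Finset V) (hT2 : 2 ≤ T.card)
    (hT : T.card = 2 ∨ 2 * k ≤ (T.card + 1) * m) :
    ∃ E, TightOn (k : ℤ) (2 * k - m) T E := by
  induction T using Finset.induction_on with
  | empty => simp at hT2
  | insert v T hv ih =>
    by_cases hd : (insert v T).card = 2 ∨ (insert v T).card * m < 2 * k
    · exact exists_tight_direct k m _ (by omega)
    · push Not at hd
      rw [Finset.card_insert_of_notMem hv] at hd hT2
      refine exists_tight_extend k m hmk T v hv ?_ (ih (by omega) (Or.inr hd.2))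
      nlinarith [hd.2]

end Helpers

/-! ### Tight multigraphs for `0 ≤ l ≤ k`, and the theorem -/

/-- The case `l ≤ k`, with `a = k - l`: loops plus parallel copies of a spanning star. -/
lemma exists_tight_small {V : Type*} [Fintype V] [DecidableEq V] [Nonempty V] (a l : ℕ) :
    ∃ E : Multiset (Sym2 V), Tight ((a : ℤ) + l) l E := by
  obtain ⟨r⟩ := ‹Nonempty V›
  have hinj : Function.Injective (fun v : V => s(v, v)) := by
    intro x y h
    simpa using h
  let P : Finset (Sym2 V) := Finset.univ.image (fun v : V => s(v, v))
  have hP : P.card = Fintype.card V := by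
    rw [Finset.card_image_of_injective _ hinj, Finset.card_univ]
  have hPS (S : Finset V) : (P.filter (fun e => e ∈ S.sym2)).card ≤ S.card := by
    rw [← Finset.card_image_of_injective S hinj]
    apply Finset.card_le_card
    intro e he
    simp only [P, Finset.mem_filter, Finset.mem_image] at he ⊢
    obtain ⟨⟨w, -, rfl⟩, h2⟩ := he
    exact ⟨w, (Finset.mk_mem_sym2_iff.1 h2).1, rfl⟩
  have hpos : 1 ≤ Fintype.card V := Fintype.card_pos_iff.2 ⟨r⟩
  refine ⟨a • P.val + l • (starEdges r (Finset.univ.erase r)).val, ?_, ?_⟩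
  · intro S
    rw [spanCount_add, spanCount_nsmul, spanCount_nsmul]
    have h1 := Nat.mul_le_mul_left a (hPS S)
    have h2 := Nat.mul_le_mul_left l
      (starEdges_filter_card_le r (Finset.univ.erase r) S (by simp))
    rcases Nat.eq_zero_or_pos S.card with h0 | h0
    · rw [h0] at h1 h2
      apply le_max_of_le_left
      omega
    · apply le_max_of_le_right
      zify [h0] at h1 h2
      push_cast
      linarith
  · rw [Multiset.card_add, Multiset.card_nsmul, Multiset.card_nsmul, Finset.card_val,
      Finset.card_val, card_starEdges, hP, Finset.card_erase_of_mem (Finset.mem_univ _),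
      Finset.card_univ]
    push_cast [hpos]
    ring

/-- Sparsity on one- and two-element vertex sets bounds the multiplicities. -/
lemma count_le_spanCount {V : Type*} [DecidableEq V] (E : Multiset (Sym2 V)) (u v : V) :
    E.count s(u, v) ≤ spanCount E {u, v} := by
  have h : s(u, v) ∈ ({u, v} : Finset V).sym2 := by simp
  rw [← Multiset.count_filter_of_pos (p := fun e => e ∈ ({u, v} : Finset V).sym2) h]
  exact Multiset.count_le_card _ _


/-- For `k ≥ 1` and `(k, ℓ, n)` in one of the three admissible ranges, there exists a
`(k,ℓ)`-tight multigraph on `n` vertices with at most `k - ℓ` loops per vertex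
(no loops when `ℓ ≥ k`) and at most `2k - ℓ` parallel edges between distinct vertices. -/
theorem stmt4 (k l : ℤ) (hk : 1 ≤ k) (n : ℕ)
    (hcase : (0 ≤ l ∧ l ≤ k ∧ 1 ≤ n) ∨
             (k < l ∧ 2 * l < 3 * k ∧ 2 ≤ n) ∨
             (3 * k ≤ 2 * l ∧ l < 2 * k ∧ (n = 2 ∨ l ≤ (n : ℤ) * (2 * k - l))))
    (V : Type*) [Fintype V] [DecidableEq V] (hcard : Fintype.card V = n) :
    ∃ E : Multiset (Sym2 V), Tight k l E ∧
      (∀ v : V, (E.count s(v, v) : ℤ) ≤ max 0 (k - l)) ∧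
      (∀ u v : V, u ≠ v → (E.count s(u, v) : ℤ) ≤ 2 * k - l) := by
  have hl0 : 0 ≤ l := by omega
  have hl2 : l < 2 * k := by omega
  suffices ∃ E : Multiset (Sym2 V), Tight k l E by
    obtain ⟨E, hE⟩ := this
    refine ⟨E, hE, fun v => ?_, fun u v huv => ?_⟩
    · have h1 := count_le_spanCount E v v
      have h2 := hE.1 {v, v}
      simp only [Finset.pair_eq_singleton, Finset.card_singleton, Nat.cast_one, mul_one] at h1 h2
      omega
    · have h1 := count_le_spanCount E u v
      have h2 := hE.1 {u, v}
      rw [Finset.card_pair huv] at h2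
      push_cast at h2
      omega
  lift k to ℕ using by omega
  lift l to ℕ using hl0
  by_cases hlk : l ≤ k
  · have : Nonempty V := by
      rw [← Fintype.card_pos_iff, hcard]
      omega
    obtain ⟨E, hE⟩ := exists_tight_small (V := V) (k - l) l
    refine ⟨E, ?_⟩
    rwa [Nat.cast_sub hlk, sub_add_cancel] at hE
  · obtain ⟨m, hm⟩ : ∃ m, l + m = 2 * k := ⟨2 * k - l, by omega⟩
    have hlm : (l : ℤ) = 2 * k - m := by omega
    have hm1 : 1 ≤ m := by omega
    have hcase' : 2 ≤ n ∧ (n = 2 ∨ 2 * k ≤ (n + 1) * m) := by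
      rcases hcase with h | ⟨-, h2, h3⟩ | ⟨h1, -, h2 | h2⟩
      · omega
      · refine ⟨h3, ?_⟩
        rcases Nat.eq_or_lt_of_le h3 with h | h
        · exact Or.inl h.symm
        -- Here `2m > k`, and `n + 1 ≥ 4`.
        · have : 4 * m ≤ (n + 1) * m := Nat.mul_le_mul_right _ (by omega)
          omega
      · omega
      · have h3 : 2 * k ≤ (n + 1) * m := by
          zify
          rw [hlm] at h2
          linarith
        refine ⟨?_, Or.inr h3⟩
        by_contra hn
        have : (n + 1) * m ≤ 2 * m := Nat.mul_le_mul_right _ (by omega)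
        omega
    obtain ⟨E, -, hc, hs⟩ := exists_tightOn k m (by omega) (Finset.univ : Finset V)
      (by rw [Finset.card_univ, hcard]; exact hcase'.1)
      (by rw [Finset.card_univ, hcard]; exact hcase'.2)
    rw [hlm]
    exact ⟨E, fun S => hs S (Finset.subset_univ S), hc⟩
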